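/- arXiv:2508.01420 — 2 statements merged into one kernel-verified Lean document; each statement's English description precedes it below -/
import Mathlib

section
/- Let E be a real Banach space, let M ⊆ E be an open and connected subset, and let δ : M → ℕ ∪ {∞} be an upper semicontinuous function. For d ∈ ℕ ∪ {∞} write M_d := δ⁻¹({d}). Assume that M_0 is open and dense in M, and that for every d ∈ ℕ ∪ {∞} with d ≥ 1 the set M_d has codimension at least 2 in M, in the following sense: every g ∈ M_d has an open neighborhood U ⊆ M and a C¹ map F : U → ℝ² whose Fréchet derivative is surjective at every point of U and which satisfies F(M_d ∩ U) = {0}. Then M_0 is connected. -/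
open Set

/-!
The argument is topological once codimension two is read as local non-separation: a set `A` is
non-separating at `x` if `x` has arbitrarily small open neighbourhoods `W` in which `W \ A` is
dense and preconnected. A fibre of a submersion onto a space of dimension at least two has this
property, since it looks like `{0} × K ⊆ G × K`.

Non-separation at every point of a connected open set `V` makes `V \ A` connected. Well-founded
induction on the value of `δ` shows that `{δ ≠ ⊥}` is non-separating at every point: near a point
`g`, semicontinuity gives `δ ≤ δ g`, so the stratum `{δ = δ g}` is relatively closed there; it is
non-separating by assumption, and at the remaining points `δ` takes smaller values.
-/

open scoped Topology

section Topology

variable {X Y : Type*} [TopologicalSpace X] [TopologicalSpace Y]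

/-- The set `A` is *locally non-separating* at `x`: arbitrarily small open neighbourhoods `W` of
`x` have a dense and preconnected trace `W \ A` on the complement of `A`. This is the topological
content of "`A` has codimension at least two at `x`". The point `x` need not belong to `A`. -/
def NonseparatingAt (A : Set X) (x : X) : Prop :=
  ∀ N ∈ 𝓝 x, ∃ W ⊆ N, IsOpen W ∧ x ∈ W ∧ IsPreconnected (W \ A) ∧ W ⊆ closure (W \ A)

namespace NonseparatingAt

variable {A B : Set X} {x : X}

theorem of_compl_mem_nhds [LocallyConnectedSpace X] (h : Aᶜ ∈ 𝓝 x) : NonseparatingAt A x := by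
  intro N hN
  obtain ⟨W, hWN, hWo, hxW, hWc⟩ :=
    locallyConnectedSpace_iff_subsets_isOpen_isConnected.1 inferInstance x _ (Filter.inter_mem hN h)
  have hWA : W \ A = W := (subset_compl_iff_disjoint_right.1 fun y hy => (hWN hy).2).sdiff_eq_left
  exact ⟨W, fun y hy => (hWN hy).1, hWo, hxW, hWA.symm ▸ hWc.isPreconnected,
    hWA.symm ▸ subset_closure⟩

theorem of_eventually_imp (hB : NonseparatingAt B x) (hAB : ∀ᶠ y in 𝓝 x, y ∈ A → y ∈ B) :
    NonseparatingAt A x := by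
  intro N hN
  obtain ⟨W, hWN, hWo, hxW, hWc, hWd⟩ := hB _ (Filter.inter_mem hN hAB)
  have hsub : W \ B ⊆ W \ A := fun y hy => ⟨hy.1, fun hyA => hy.2 ((hWN hy.1).2 hyA)⟩
  exact ⟨W, fun y hy => (hWN hy).1, hWo, hxW, hWc.subset_closure hsub (sdiff_subset.trans hWd),
    hWd.trans (closure_mono hsub)⟩

theorem preimage_openPartialHomeomorph {A : Set Y} (e : OpenPartialHomeomorph X Y)
    (hx : x ∈ e.source) (hA : NonseparatingAt A (e x)) : NonseparatingAt (e ⁻¹' A) x := by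
  intro N hN
  have hN' : e.target ∩ e.symm ⁻¹' N ∈ 𝓝 (e x) :=
    Filter.inter_mem (e.open_target.mem_nhds (e.map_source hx))
      ((e.tendsto_symm hx).eventually_mem hN)
  obtain ⟨W, hWN, hWo, hxW, hWc, hWd⟩ := hA _ hN'
  have hWt : W ⊆ e.target := fun y hy => (hWN hy).1
  have himage : e.symm '' W \ e ⁻¹' A = e.symm '' (W \ A) := by
    ext z
    constructor
    · rintro ⟨⟨y, hy, rfl⟩, hyA⟩
      exact ⟨y, ⟨hy, by rwa [mem_preimage, e.right_inv (hWt hy)] at hyA⟩, rfl⟩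
    · rintro ⟨y, ⟨hy, hyA⟩, rfl⟩
      exact ⟨⟨y, hy, rfl⟩, by rwa [mem_preimage, e.right_inv (hWt hy)]⟩
  have hcont : ContinuousOn e.symm W := e.continuousOn_symm.mono hWt
  refine ⟨e.symm '' W, image_subset_iff.2 fun y hy => (hWN hy).2,
    e.isOpen_image_symm_of_subset_target hWo hWt, ⟨e x, hxW, e.left_inv hx⟩, ?_, ?_⟩
  · rw [himage]
    exact hWc.image _ (hcont.mono sdiff_subset)
  · rw [himage]
    rintro _ ⟨y, hy, rfl⟩
    exact ((hcont y hy).mono sdiff_subset).mem_closure_image (hWd hy)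

theorem preimage_fst [LocallyConnectedSpace Y] {y : Y} (hA : NonseparatingAt A x) :
    NonseparatingAt (Prod.fst ⁻¹' A : Set (X × Y)) (x, y) := by
  intro N hN
  obtain ⟨S, hS, T, hT, hST⟩ := mem_nhds_prod_iff.1 hN
  obtain ⟨W, hWS, hWo, hxW, hWc, hWd⟩ := hA S hS
  obtain ⟨V, hVT, hVo, hyV, hVc⟩ :=
    locallyConnectedSpace_iff_subsets_isOpen_isConnected.1 inferInstance y T hT
  have hprod : (W ×ˢ V) \ (Prod.fst ⁻¹' A) = (W \ A) ×ˢ V := by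
    ext p
    simp only [mem_sdiff, mem_prod, mem_preimage]
    tauto
  refine ⟨W ×ˢ V, (prod_mono hWS hVT).trans hST, hWo.prod hVo, ⟨hxW, hyV⟩, ?_, ?_⟩
  · exact hprod ▸ hWc.prod hVc.isPreconnected
  · rw [hprod, closure_prod_eq]
    exact prod_mono hWd subset_closure

end NonseparatingAt

theorem subset_closure_sdiff_of_nonseparatingAt {V A : Set X} (hV : IsOpen V)
    (hA : ∀ x ∈ V, NonseparatingAt A x) : V ⊆ closure (V \ A) := by
  intro x hx
  obtain ⟨W, hWV, -, hxW, -, hWd⟩ := hA x hx V (hV.mem_nhds hx)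
  exact closure_mono (sdiff_subset_sdiff_left hWV) (hWd hxW)

/-- If open sets split `V \ A`, the closures of the two parts cover `V` by density, hence meet; a
small neighbourhood of a common point then contradicts non-separation there. -/
theorem isPreconnected_sdiff_of_nonseparatingAt {V A : Set X} (hV : IsOpen V)
    (hVc : IsPreconnected V) (hA : ∀ x ∈ V, NonseparatingAt A x) : IsPreconnected (V \ A) := by
  intro u v hu hv huv hVu hVv
  have hcover : V ⊆ closure (V \ A ∩ u) ∪ closure (V \ A ∩ v) := by
    rw [← closure_union, ← inter_union_distrib_left, inter_eq_left.2 huv]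
    exact subset_closure_sdiff_of_nonseparatingAt hV hA
  have hmeets {s : Set X} (hs : (V \ A ∩ s).Nonempty) : (V ∩ closure (V \ A ∩ s)).Nonempty :=
    hs.mono fun y hy => ⟨hy.1.1, subset_closure hy⟩
  obtain ⟨x, hxV, hxu, hxv⟩ := isPreconnected_closed_iff.1 hVc _ _ isClosed_closure
    isClosed_closure hcover (hmeets hVu) (hmeets hVv)
  obtain ⟨W, hWV, hWo, hxW, hWc, -⟩ := hA x hxV V (hV.mem_nhds hxV)
  have hWVA : W \ A ⊆ V \ A := sdiff_subset_sdiff_left hWV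
  have hWmeets {s : Set X} (hs : x ∈ closure (V \ A ∩ s)) : (W \ A ∩ s).Nonempty := by
    obtain ⟨y, hyW, hy⟩ := mem_closure_iff.1 hs W hWo hxW
    exact ⟨y, ⟨hyW, hy.1.2⟩, hy.2⟩
  exact (hWc u v hu hv (hWVA.trans huv) (hWmeets hxu) (hWmeets hxv)).mono
    (inter_subset_inter_left _ hWVA)

theorem NonseparatingAt.of_forall_sdiff {A B U : Set X} {x : X} (hB : NonseparatingAt B x)
    (hU : U ∈ 𝓝 x) (hUB : IsOpen (U \ B)) (hA : ∀ y ∈ U \ B, NonseparatingAt A y) :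
    NonseparatingAt A x := by
  intro N hN
  obtain ⟨W, hWNU, hWo, hxW, hWc, hWd⟩ := hB _ (Filter.inter_mem hN hU)
  have hWU : W \ B = W ∩ (U \ B) := by
    rw [← inter_sdiff_assoc, inter_eq_left.2 (hWNU.trans inter_subset_right)]
  have hWBo : IsOpen (W \ B) := hWU ▸ hWo.inter hUB
  have hWBA : ∀ y ∈ W \ B, NonseparatingAt A y := fun y hy => hA y (hWU ▸ hy).2
  have hsub : (W \ B) \ A ⊆ W \ A := sdiff_subset_sdiff_left sdiff_subset
  have hdense : W ⊆ closure ((W \ B) \ A) := hWd.trans <|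
    closure_minimal (subset_closure_sdiff_of_nonseparatingAt hWBo hWBA) isClosed_closure
  have hpreconn : IsPreconnected ((W \ B) \ A) :=
    isPreconnected_sdiff_of_nonseparatingAt hWBo hWc hWBA
  exact ⟨W, hWNU.trans inter_subset_left, hWo, hxW,
    hpreconn.subset_closure hsub (sdiff_subset.trans hdense),
    hdense.trans (closure_mono hsub)⟩

end Topology

section Strata

variable {X α : Type*} [TopologicalSpace X] [LinearOrder α] {M : Set X} {δ : X → α}

theorem isOpen_setOf_lt_of_upperSemicontinuousOn (hM : IsOpen M) (hδ : UpperSemicontinuousOn δ M)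
    (c : α) : IsOpen {x ∈ M | δ x < c} := by
  obtain ⟨u, hu, hMu⟩ := upperSemicontinuousOn_iff_preimage_Iio.1 hδ c
  exact (hMu ▸ hM.inter hu : IsOpen (M ∩ δ ⁻¹' Iio c))

theorem isOpen_setOf_le_of_upperSemicontinuousOn [WellFoundedLT α] (hM : IsOpen M)
    (hδ : UpperSemicontinuousOn δ M) (c : α) : IsOpen {x ∈ M | δ x ≤ c} := by
  by_cases hc : IsMax c
  · simpa only [hc.isTop (δ _), and_true, ofPred_mem_eq] using hM
  · obtain ⟨c', hcc'⟩ := exists_covBy_of_wellFoundedLT hc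
    simpa only [hcc'.lt_iff_le_left] using isOpen_setOf_lt_of_upperSemicontinuousOn hM hδ c'

variable [LocallyConnectedSpace X] [OrderBot α] [WellFoundedLT α]

theorem nonseparatingAt_setOf_ne_bot (hM : IsOpen M) (hδ : UpperSemicontinuousOn δ M)
    (hstrata : ∀ g ∈ M, δ g ≠ ⊥ → NonseparatingAt {x ∈ M | δ x = δ g} g) {g : X} (hg : g ∈ M) :
    NonseparatingAt {x | δ x ≠ ⊥} g := by
  induction hd : δ g using WellFoundedLT.induction generalizing g with
  | ind d ih =>
    have hle : {x ∈ M | δ x ≤ d} ∈ 𝓝 g :=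
      (isOpen_setOf_le_of_upperSemicontinuousOn hM hδ d).mem_nhds ⟨hg, hd.le⟩
    by_cases hbot : d = ⊥
    · refine .of_compl_mem_nhds (Filter.mem_of_superset hle fun x hx => ?_)
      simpa [hbot] using hx.2
    · have hdiff : {x ∈ M | δ x ≤ d} \ {x ∈ M | δ x = d} = {x ∈ M | δ x < d} := by
        ext x
        simp only [mem_sdiff, mem_ofPred_eq, lt_iff_le_and_ne]
        tauto
      refine .of_forall_sdiff (hd ▸ hstrata g hg (hd ▸ hbot)) hle ?_ ?_
      · exact hdiff ▸ isOpen_setOf_lt_of_upperSemicontinuousOn hM hδ d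
      · rw [hdiff]
        exact fun x hx => ih (δ x) hx.2 hx.1 rfl

theorem connectedness_of_minimal_stratum_general (hM : IsOpen M) (hMc : IsConnected M)
    (hδ : UpperSemicontinuousOn δ M)
    (hstrata : ∀ g ∈ M, δ g ≠ ⊥ → NonseparatingAt {x ∈ M | δ x = δ g} g) :
    IsConnected {x ∈ M | δ x = ⊥} := by
  have hnonsep : ∀ g ∈ M, NonseparatingAt {x | δ x ≠ ⊥} g :=
    fun _ => nonseparatingAt_setOf_ne_bot hM hδ hstrata
  have hdiff : M \ {x | δ x ≠ ⊥} = {x ∈ M | δ x = ⊥} := by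
    ext x
    simp only [mem_sdiff, mem_ofPred_eq, not_not]
  have hdense : M ⊆ closure (M \ {x | δ x ≠ ⊥}) :=
    subset_closure_sdiff_of_nonseparatingAt hM hnonsep
  rw [← hdiff]
  exact ⟨closure_nonempty_iff.1 (hMc.nonempty.mono hdense),
    isPreconnected_sdiff_of_nonseparatingAt hM hMc.isPreconnected hnonsep⟩

end Strata

section Submersion

variable {G : Type*} [NormedAddCommGroup G] [NormedSpace ℝ G]

theorem isPreconnected_ball_sdiff_center (hG : 1 < Module.rank ℝ G) (c : G) (r : ℝ) :
    IsPreconnected (Metric.ball c r \ {c}) := by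
  rcases le_or_gt r 0 with hr | hr
  · simpa only [Metric.ball_eq_empty.2 hr, empty_sdiff] using isPreconnected_empty
  let e := OpenPartialHomeomorph.univBall c r
  have hinj : Function.Injective e := by
    simpa only [e, OpenPartialHomeomorph.univBall_source, injOn_univ] using e.injOn
  have hrange : e '' univ = Metric.ball c r := by
    rw [← OpenPartialHomeomorph.univBall_target c hr, ← e.image_source_eq_target,
      OpenPartialHomeomorph.univBall_source]
  have himage : e '' {0}ᶜ = Metric.ball c r \ {c} := by
    rw [compl_eq_univ_sdiff, image_sdiff hinj, hrange, image_singleton,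
      OpenPartialHomeomorph.univBall_apply_zero]
  rw [← himage]
  exact (isConnected_compl_singleton_of_one_lt_rank hG 0).isPreconnected.image _
    (OpenPartialHomeomorph.continuous_univBall c r).continuousOn

theorem nonseparatingAt_singleton (hG : 1 < Module.rank ℝ G) (c : G) : NonseparatingAt {c} c := by
  intro N hN
  obtain ⟨r, hr, hrN⟩ := Metric.mem_nhds_iff.1 hN
  have : Nontrivial G := rank_pos_iff_nontrivial.1 (zero_lt_one.trans hG)
  exact ⟨Metric.ball c r, hrN, Metric.isOpen_ball, Metric.mem_ball_self hr,
    isPreconnected_ball_sdiff_center hG c r,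
    (dense_compl_singleton c).open_subset_closure_inter Metric.isOpen_ball⟩

variable {E : Type*} [NormedAddCommGroup E] [NormedSpace ℝ E] [CompleteSpace E]

theorem nonseparatingAt_fiber [CompleteSpace G] (hG : 1 < Module.rank ℝ G) {F : E → G}
    {F' : E →L[ℝ] G} {g : E} (hF : HasStrictFDerivAt F F' g) (hF' : Function.Surjective F')
    (hker : F'.ker.ClosedComplemented) : NonseparatingAt (F ⁻¹' {F g}) g := by
  have hrange : F'.range = ⊤ := LinearMap.range_eq_top.2 hF'
  have hfst := (nonseparatingAt_singleton hG (F g)).preimage_fst (y := (0 : F'.ker))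
  exact .preimage_openPartialHomeomorph
    (hF.implicitToOpenPartialHomeomorphOfComplemented F F' hrange hker)
    (hF.mem_implicitToOpenPartialHomeomorphOfComplemented_source hrange hker) (by simpa using hfst)

theorem nonseparatingAt_of_submersion [FiniteDimensional ℝ G] (hG : 1 < Module.rank ℝ G)
    {F : E → G} {F' : E → E →L[ℝ] G} {A U : Set E} {g : E} (hU : U ∈ 𝓝 g)
    (hF : ∀ x ∈ U, HasFDerivAt F (F' x) x) (hF'c : ContinuousAt F' g)
    (hF' : Function.Surjective (F' g)) (hA : A ∩ U ⊆ F ⁻¹' {F g}) : NonseparatingAt A g := by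
  have : CompleteSpace G := FiniteDimensional.complete ℝ G
  have hstrict : HasStrictFDerivAt F (F' g) g :=
    hasStrictFDerivAt_of_hasFDerivAt_of_continuousAt (Filter.eventually_of_mem hU hF) hF'c
  have hfiber : NonseparatingAt (F ⁻¹' {F g}) g := nonseparatingAt_fiber hG hstrict hF'
    (F' g).ker_closedComplemented_of_finiteDimensional_range
  exact hfiber.of_eventually_imp (Filter.eventually_of_mem hU fun x hxU hxA => hA ⟨hxA, hxU⟩)

end Submersion

/-- Let `M` be an open connected subset of a real Banach space together with an upper
semicontinuous function `δ : M → ℕ ∪ {∞}` with level sets `M_d = δ⁻¹({d})`. If `M_0` is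
open and dense in `M`, and for every `d ≥ 1` the set `M_d` has codimension at least `2`
in `M` (in the sense of local `C¹` submersions to `ℝ²` vanishing on `M_d`), then `M_0`
is connected. -/
theorem connectedness_of_minimal_stratum
    {E : Type*} [NormedAddCommGroup E] [NormedSpace ℝ E] [CompleteSpace E]
    (M : Set E) (hM_open : IsOpen M) (hM_conn : IsConnected M)
    (δ : E → ℕ∞) (hδ : UpperSemicontinuousOn δ M)
    (Md : ℕ∞ → Set E) (hMd : ∀ d : ℕ∞, Md d = {x ∈ M | δ x = d})
    (h0_open : IsOpen (Md 0)) (h0_dense : M ⊆ closure (Md 0))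
    (hcodim : ∀ d : ℕ∞, 1 ≤ d → ∀ g ∈ Md d,
      ∃ U : Set E, IsOpen U ∧ g ∈ U ∧ U ⊆ M ∧
        ∃ (F : E → ℝ × ℝ) (F' : E → E →L[ℝ] ℝ × ℝ),
          ContinuousOn F' U ∧
          (∀ x ∈ U, HasFDerivAt F (F' x) x) ∧
          (∀ x ∈ U, Function.Surjective (F' x)) ∧
          (∀ x ∈ Md d ∩ U, F x = 0)) :
    IsConnected (Md 0) := by
  simp only [hMd] at hcodim ⊢
  refine connectedness_of_minimal_stratum_general hM_open hM_conn hδ fun g hgM hg => ?_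
  obtain ⟨U, hUo, hgU, -, F, F', hF'c, hF, hF', hzero⟩ :=
    hcodim (δ g) (Order.one_le_iff_ne_zero.2 hg) g ⟨hgM, rfl⟩
  have hFg : F g = 0 := hzero g ⟨⟨hgM, rfl⟩, hgU⟩
  have hrank : 1 < Module.rank ℝ (ℝ × ℝ) := Module.one_lt_rank_of_one_lt_finrank (by simp)
  have hU : U ∈ 𝓝 g := hUo.mem_nhds hgU
  exact nonseparatingAt_of_submersion hrank hU hF (hF'c.continuousAt hU) (hF' g hgU)
    fun x hx => (hzero x hx).trans hFg.symm
end

section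
/- Let E be a real Banach space, let U ⊆ E be an open connected subset, and let F : U → ℝ² be a C¹ map whose Fréchet derivative DF(x) : E → ℝ² is surjective at every point x ∈ U. Then the complement U \ F⁻¹({0}) of the zero set of F is dense in U and connected. -/
open Set

/-!
Near a zero, the implicit function theorem straightens `F` into the projection `ℝ² × K → ℝ²`, so
arbitrarily small neighbourhoods lose only a slice `{0} × B` from a product `D × B` of balls; what
remains is connected because a punctured disc is. Hence the zero set nowhere separates `U` locally.
A locally constant function on its complement then has a limit at every point of `U`, so it extends
to a locally constant function on the connected set `U` and must be constant.
-/

open Filter Topology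

section LocallyNonseparating

variable {X Y : Type*} [TopologicalSpace X] [TopologicalSpace Y]

/-- The set `Z` is locally nonseparating at `x`: removing `Z` from suitable arbitrarily small
neighbourhoods of `x` leaves a connected set. Connected sets being nonempty, this forces `x` to lie
in the closure of `Zᶜ`. The point `x` need not belong to `Z`. -/
def LocallyNonseparatingAt (Z : Set X) (x : X) : Prop :=
  ∀ U ∈ 𝓝 x, ∃ W ∈ 𝓝 x, W ⊆ U ∧ IsConnected (W \ Z)

namespace LocallyNonseparatingAt

theorem of_eventually_notMem [LocallyConnectedSpace X] {Z : Set X} {x : X}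
    (h : ∀ᶠ y in 𝓝 x, y ∉ Z) : LocallyNonseparatingAt Z x := by
  intro U hU
  obtain ⟨V, hVU, hV_open, hxV, hV_conn⟩ :=
    locallyConnectedSpace_iff_subsets_isOpen_isConnected.1 ‹_› x _ (inter_mem hU h)
  have hVZ : V \ Z = V := sdiff_eq_left.2 (disjoint_left.2 fun _ hy => (hVU hy).2)
  exact ⟨V, hV_open.mem_nhds hxV, hVU.trans inter_subset_left, by rwa [hVZ]⟩

theorem fst_preimage [LocallyConnectedSpace Y] {Z : Set X} {p : X × Y}
    (h : LocallyNonseparatingAt Z p.1) : LocallyNonseparatingAt (Prod.fst ⁻¹' Z) p := by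
  intro U hU
  obtain ⟨A, hA, B, hB, hAB⟩ := mem_nhds_prod_iff.1 hU
  obtain ⟨W, hW, hWA, hW_conn⟩ := h A hA
  obtain ⟨V, hVB, hV_open, hpV, hV_conn⟩ :=
    locallyConnectedSpace_iff_subsets_isOpen_isConnected.1 ‹_› p.2 B hB
  have hWV : W ×ˢ V \ Prod.fst ⁻¹' Z = (W \ Z) ×ˢ V := by grind
  refine ⟨W ×ˢ V, prod_mem_nhds hW (hV_open.mem_nhds hpV), (prod_mono hWA hVB).trans hAB, ?_⟩
  rw [hWV]
  exact hW_conn.prod hV_conn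

theorem openPartialHomeomorph_preimage {Z : Set Y} {x : X} (e : OpenPartialHomeomorph X Y)
    (hx : x ∈ e.source) (h : LocallyNonseparatingAt Z (e x)) :
    LocallyNonseparatingAt (e ⁻¹' Z) x := by
  intro U hU
  have hU' : e.target ∩ e.symm ⁻¹' U ∈ 𝓝 (e x) :=
    inter_mem (e.open_target.mem_nhds (e.map_source hx))
      ((e.tendsto_symm hx).eventually_mem hU)
  obtain ⟨W, hW, hWU, hW_conn⟩ := h _ hU'
  have h_image : e.symm '' W \ e ⁻¹' Z = e.symm '' (W \ Z) := by
    ext y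
    constructor
    · rintro ⟨⟨w, hw, rfl⟩, hy⟩
      exact ⟨w, ⟨hw, by rwa [mem_preimage, e.right_inv (hWU hw).1] at hy⟩, rfl⟩
    · rintro ⟨w, ⟨hw, hwZ⟩, rfl⟩
      exact ⟨mem_image_of_mem _ hw, by rwa [mem_preimage, e.right_inv (hWU hw).1]⟩
  refine ⟨e.symm '' W, ?_, image_subset_iff.2 fun w hw => (hWU hw).2, ?_⟩
  · rw [← e.symm_map_nhds_eq hx]
    exact image_mem_map hW
  · rw [h_image]
    exact hW_conn.image _ (e.continuousOn_symm.mono fun w hw => (hWU hw.1).1)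

theorem mem_closure_sdiff {Z U : Set X} {x : X} (h : LocallyNonseparatingAt Z x) (hU : U ∈ 𝓝 x) :
    x ∈ closure (U \ Z) := by
  rw [mem_closure_iff_nhds]
  intro V hV
  obtain ⟨W, -, hWVU, hW_conn⟩ := h _ (inter_mem hV hU)
  exact hW_conn.nonempty.mono fun y hy => ⟨(hWVU hy.1).1, (hWVU hy.1).2, hy.2⟩

theorem exists_tendsto_of_continuousOn {T : Type*} [TopologicalSpace T] [DiscreteTopology T]
    {Z U : Set X} {x : X} (h : LocallyNonseparatingAt Z x) (hU : U ∈ 𝓝 x) {f : X → T}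
    (hf : ContinuousOn f (U \ Z)) : ∃ t, Tendsto f (𝓝[U \ Z] x) (𝓝 t) := by
  obtain ⟨W, hW, hWU, hW_conn⟩ := h U hU
  obtain ⟨y, hy⟩ := hW_conn.nonempty
  have h_const : ∀ᶠ z in 𝓝[U \ Z] x, f z = f y := by
    filter_upwards [mem_nhdsWithin_of_mem_nhds hW, self_mem_nhdsWithin] with z hzW hz
    exact hW_conn.isPreconnected.constant (hf.mono (sdiff_subset_sdiff_left hWU)) ⟨hzW, hz.2⟩ hy
  exact ⟨f y, tendsto_nhds_of_eventually_eq h_const⟩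

end LocallyNonseparatingAt

theorem isConnected_sdiff_of_forall_locallyNonseparatingAt {U Z : Set X} (hU_open : IsOpen U)
    (hU_conn : IsConnected U) (hZ : ∀ x ∈ U, LocallyNonseparatingAt Z x) :
    IsConnected (U \ Z) := by
  have hU_nhds : ∀ x ∈ U, U ∈ 𝓝 x := fun x hx => hU_open.mem_nhds hx
  have h_dense : U ⊆ closure (U \ Z) := fun x hx => (hZ x hx).mem_closure_sdiff (hU_nhds x hx)
  refine ⟨closure_nonempty_iff.1 (hU_conn.nonempty.mono h_dense),
    isPreconnected_of_forall_constant fun f hf x hx y hy => ?_⟩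
  have h_extend : ContinuousOn (extendFrom (U \ Z) f) U :=
    continuousOn_extendFrom h_dense fun z hz =>
      (hZ z hz).exists_tendsto_of_continuousOn (hU_nhds z hz) hf
  calc
    f x = extendFrom (U \ Z) f x := (extendFrom_extends hf x hx).symm
    _ = extendFrom (U \ Z) f y := hU_conn.isPreconnected.constant h_extend hx.1 hy.1
    _ = f y := extendFrom_extends hf y hy

end LocallyNonseparating

section RegularFiber

variable {E G : Type*} [NormedAddCommGroup E] [NormedSpace ℝ E]
  [NormedAddCommGroup G] [NormedSpace ℝ G]

theorem isConnected_ball_sdiff_center (hG : 1 < Module.rank ℝ G) (c : G) {r : ℝ} (hr : 0 < r) :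
    IsConnected (Metric.ball c r \ {c}) := by
  let e : OpenPartialHomeomorph G G := OpenPartialHomeomorph.univBall c r
  have he_source : e.source = univ := OpenPartialHomeomorph.univBall_source c r
  have he_image : e '' {0}ᶜ = Metric.ball c r \ {c} := by
    have he_inj : InjOn e univ := he_source ▸ e.injOn
    have he_range : e '' univ = Metric.ball c r := by
      rw [← he_source, e.image_source_eq_target, OpenPartialHomeomorph.univBall_target c hr]
    rw [compl_eq_univ_sdiff, he_inj.image_sdiff_subset (subset_univ _), he_range, image_singleton,
      OpenPartialHomeomorph.univBall_apply_zero]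
  rw [← he_image]
  exact (isConnected_compl_singleton_of_one_lt_rank hG 0).image e
    (OpenPartialHomeomorph.continuous_univBall c r).continuousOn

theorem locallyNonseparatingAt_singleton (hG : 1 < Module.rank ℝ G) (c : G) :
    LocallyNonseparatingAt {c} c := by
  intro U hU
  obtain ⟨r, hr, hrU⟩ := Metric.mem_nhds_iff.1 hU
  exact ⟨Metric.ball c r, Metric.ball_mem_nhds c hr, hrU, isConnected_ball_sdiff_center hG c hr⟩

variable [CompleteSpace E] [CompleteSpace G]

theorem LocallyNonseparatingAt.preimage_of_hasStrictFDerivAt {F : E → G} {F' : E →L[ℝ] G}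
    {Z : Set G} {x : E} (h : LocallyNonseparatingAt Z (F x)) (hF : HasStrictFDerivAt F F' x)
    (h_surj : Function.Surjective F') (h_ker : F'.ker.ClosedComplemented) :
    LocallyNonseparatingAt (F ⁻¹' Z) x := by
  have h_range : F'.range = ⊤ := LinearMap.range_eq_top.2 h_surj
  let e : OpenPartialHomeomorph E (G × F'.ker) :=
    hF.implicitToOpenPartialHomeomorphOfComplemented F F' h_range h_ker
  have he_fst : ∀ y, (e y).1 = F y :=
    hF.implicitToOpenPartialHomeomorphOfComplemented_fst h_range h_ker
  have h_slice : LocallyNonseparatingAt (Prod.fst ⁻¹' Z) (e x) :=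
    fst_preimage (by rwa [he_fst])
  have h_preimage : e ⁻¹' (Prod.fst ⁻¹' Z) = F ⁻¹' Z := by
    ext y
    rw [mem_preimage, mem_preimage, he_fst, mem_preimage]
  rw [← h_preimage]
  exact h_slice.openPartialHomeomorph_preimage e
    (hF.mem_implicitToOpenPartialHomeomorphOfComplemented_source h_range h_ker)

theorem complement_of_submersion_zero_set_dense_and_connected_general
    (hG : 1 < Module.rank ℝ G) {U : Set E} (hU_open : IsOpen U) (hU_conn : IsConnected U)
    {F : E → G} {F' : E → E →L[ℝ] G} {c : G} (hF_cont : ContinuousOn F U)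
    (hF_deriv : ∀ x ∈ U, F x = c → HasStrictFDerivAt F (F' x) x)
    (hF'_surj : ∀ x ∈ U, F x = c → Function.Surjective (F' x))
    (hF'_ker : ∀ x ∈ U, F x = c → (F' x).ker.ClosedComplemented) :
    U ⊆ closure {x ∈ U | F x ≠ c} ∧ IsConnected {x ∈ U | F x ≠ c} := by
  have h_nonsep : ∀ x ∈ U, LocallyNonseparatingAt (F ⁻¹' {c}) x := by
    intro x hx
    by_cases hxc : F x = c
    · have h_point : LocallyNonseparatingAt {c} (F x) :=
        hxc.symm ▸ locallyNonseparatingAt_singleton hG c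
      exact h_point.preimage_of_hasStrictFDerivAt (hF_deriv x hx hxc) (hF'_surj x hx hxc)
        (hF'_ker x hx hxc)
    · have hF_contAt : ContinuousAt F x := hF_cont.continuousAt (hU_open.mem_nhds hx)
      exact .of_eventually_notMem (hF_contAt.eventually_ne hxc)
  exact ⟨fun x hx => (h_nonsep x hx).mem_closure_sdiff (hU_open.mem_nhds hx),
    isConnected_sdiff_of_forall_locallyNonseparatingAt hU_open hU_conn h_nonsep⟩

end RegularFiber

/-- If `U` is an open connected subset of a real Banach space and `F : U → ℝ²` is a `C¹`
map whose Fréchet derivative is surjective at every point of `U`, then the complement of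
the zero set of `F` in `U` is dense in `U` and connected. -/
theorem complement_of_submersion_zero_set_dense_and_connected
    {E : Type*} [NormedAddCommGroup E] [NormedSpace ℝ E] [CompleteSpace E]
    (U : Set E) (hU_open : IsOpen U) (hU_conn : IsConnected U)
    (F : E → ℝ × ℝ) (F' : E → E →L[ℝ] ℝ × ℝ)
    (hF'_cont : ContinuousOn F' U)
    (hF_deriv : ∀ x ∈ U, HasFDerivAt F (F' x) x)
    (hF'_surj : ∀ x ∈ U, Function.Surjective (F' x)) :
    U ⊆ closure {x ∈ U | F x ≠ 0} ∧ IsConnected {x ∈ U | F x ≠ 0} := by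
  have h_rank : 1 < Module.rank ℝ (ℝ × ℝ) := Module.one_lt_rank_of_one_lt_finrank (by simp)
  have hF_strict : ∀ x ∈ U, HasStrictFDerivAt F (F' x) x := fun x hx =>
    have hU : U ∈ 𝓝 x := hU_open.mem_nhds hx
    hasStrictFDerivAt_of_hasFDerivAt_of_continuousAt (eventually_of_mem hU hF_deriv)
      (hF'_cont.continuousAt hU)
  exact complement_of_submersion_zero_set_dense_and_connected_general h_rank hU_open hU_conn
    (fun x hx => (hF_deriv x hx).continuousAt.continuousWithinAt)
    (fun x hx _ => hF_strict x hx) (fun x hx _ => hF'_surj x hx)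
    (fun x _ _ => (F' x).ker_closedComplemented_of_finiteDimensional_range)
end
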